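/- Tensor injectivity lemma: Let V_j ⊂ R^{N_j} (j = 1,…,d) be subspaces all of whose nonzero vectors are s-sparse, and let U_j ∈ R^{m_j×N_j} satisfy NSP_s. If 𝒲 ∈ V_1 ∘ V_2 ∘ … ∘ V_d (i.e., the column space of each mode-j unfolding of 𝒲 is contained in V_j) and 𝒲 ×_1 U_1 ×_2 U_2 ⋯ ×_d U_d = 0, then 𝒲 = 0. -/

import Mathlib

/-- A vector is `s`-sparse if it has at most `s` nonzero entries. -/
def SparseVec {n : ℕ} (s : ℕ) (x : Fin n → ℝ) : Prop :=
  (Finset.univ.filter fun i => x i ≠ 0).card ≤ s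

/-- The null space property of order `s`. -/
def NSP {m n : ℕ} (s : ℕ) (A : Matrix (Fin m) (Fin n) ℝ) : Prop :=
  ∀ w : Fin n → ℝ, A.mulVec w = 0 → w ≠ 0 →
    ∀ S : Finset (Fin n), S.card = s →
      ∑ i ∈ S, |w i| < ∑ i ∈ Sᶜ, |w i|

/-- The multi-mode product `X ×₁ U 1 ×₂ U 2 ⋯ ×_d U d` of a tensor with matrices
`U j` applied on every mode. -/
def modeProdAll {d : ℕ} {N M : Fin d → ℕ}
    (U : ∀ j, Matrix (Fin (M j)) (Fin (N j)) ℝ) (X : (∀ j, Fin (N j)) → ℝ) :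
    (∀ j, Fin (M j)) → ℝ :=
  fun k => ∑ g : ∀ j, Fin (N j), (∏ j, U j (k j) (g j)) * X g

/-- Full contraction of a tensor with one covector per mode. -/
noncomputable def contr {d : ℕ} {N : Fin d → ℕ} (W : (∀ j, Fin (N j)) → ℝ)
    (c : ∀ j, Fin (N j) → ℝ) : ℝ := ∑ g : ∀ j, Fin (N j), (∏ j, c j (g j)) * W g

theorem contr_swap {d : ℕ} {N : Fin d → ℕ} (W : (∀ j, Fin (N j)) → ℝ)
    (V : ∀ j, Submodule ℝ (Fin (N j) → ℝ))
    (hW : ∀ j, ∀ g : ∀ l, Fin (N l), (fun a => W (Function.update g j a)) ∈ V j)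
    (c : ∀ j, Fin (N j) → ℝ) (j : Fin d) (x y : Fin (N j) → ℝ)
    (hxy : ∀ v ∈ V j, ∑ a, x a * v a = ∑ a, y a * v a) :
    contr W (Function.update c j x) = contr W (Function.update c j y) := by
  have key : ∀ x : Fin (N j) → ℝ, contr W (Function.update c j x) =
      ∑ r : ∀ i : {i // i ≠ j}, Fin (N i), ∑ a : Fin (N j),
        x a * ((∏ i : {i // i ≠ j}, c i (r i)) * W ((Equiv.piSplitAt j _).symm (a, r))) := by
    intro x
    unfold contr
    rw [← Fintype.sum_prod_type_right'
      (f := fun a r => x a * ((∏ i : {i // i ≠ j}, c i (r i)) *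
        W ((Equiv.piSplitAt j (fun i => Fin (N i))).symm (a, r))))]
    refine Fintype.sum_equiv (Equiv.piSplitAt j (fun i => Fin (N i))) _ _ ?_
    intro g
    have h1 : ((Equiv.piSplitAt j (fun i => Fin (N i))).symm
      (((Equiv.piSplitAt j (fun i => Fin (N i))) g).1,
        ((Equiv.piSplitAt j (fun i => Fin (N i))) g).2)) = g :=
      (Equiv.piSplitAt j (fun i => Fin (N i))).symm_apply_apply g
    rw [h1, ← mul_assoc]
    congr 1
    rw [Fintype.prod_eq_mul_prod_subtype_ne _ j]
    congr 1
    · simp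
    · refine Finset.prod_congr rfl fun i _ => ?_
      simp [Function.update_of_ne i.2]
  rw [key, key]
  refine Finset.sum_congr rfl fun r _ => ?_
  rcases isEmpty_or_nonempty (Fin (N j)) with he | ⟨⟨a0⟩⟩
  · simp
  have hu : ∀ a, (Equiv.piSplitAt j (fun i => Fin (N i))).symm (a, r) =
      Function.update ((Equiv.piSplitAt j (fun i => Fin (N i))).symm (a0, r)) j a := by
    intro a
    funext i
    by_cases hi : i = j
    · subst hi; simp
    · simp [hi]
  have e : ∀ z : Fin (N j) → ℝ, ∑ a, z a * ((∏ i : {i // i ≠ j}, c i (r i)) *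
      W ((Equiv.piSplitAt j (fun i => Fin (N i))).symm (a, r))) =
      ∑ a, z a * ((∏ i : {i // i ≠ j}, c i (r i)) *
      W (Function.update ((Equiv.piSplitAt j (fun i => Fin (N i))).symm (a0, r)) j a)) :=
    fun z => Finset.sum_congr rfl fun a _ => by rw [← hu a]
  rw [e, e]
  exact hxy _ ((V j).smul_mem (∏ i : {i // i ≠ j}, c i (r i)) (hW j _))

theorem contr_congr {d : ℕ} {N : Fin d → ℕ} (W : (∀ j, Fin (N j)) → ℝ)
    (V : ∀ j, Submodule ℝ (Fin (N j) → ℝ))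
    (hW : ∀ j, ∀ g : ∀ l, Fin (N l), (fun a => W (Function.update g j a)) ∈ V j)
    (x y : ∀ j, Fin (N j) → ℝ)
    (hxy : ∀ j, ∀ v ∈ V j, ∑ a, x j a * v a = ∑ a, y j a * v a) :
    contr W x = contr W y := by
  have : ∀ t : Finset (Fin d), contr W (t.piecewise x y) = contr W y := by
    intro t
    induction t using Finset.induction_on with
    | empty => simp
    | insert j t hj ih =>
      rw [Finset.piecewise_insert, contr_swap W V hW _ j (x j) (y j) (hxy j), ← ih]
      congr 1
      rw [Function.update_eq_self_iff]
      simp [hj]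
  simpa using this Finset.univ

theorem nsp_inj {m n s : ℕ} (hs : s ≤ n) (V : Submodule ℝ (Fin n → ℝ))
    (hV : ∀ v ∈ V, v ≠ 0 → SparseVec s v) (A : Matrix (Fin m) (Fin n) ℝ) (hA : NSP s A)
    (v : Fin n → ℝ) (hv : v ∈ V) (h0 : A.mulVec v = 0) : v = 0 := by
  by_contra hne
  obtain ⟨S, hS, -, hc⟩ := Finset.exists_subsuperset_card_eq
    (Finset.subset_univ (Finset.univ.filter fun i => v i ≠ 0)) (hV v hv hne) (by simpa using hs)
  have h := hA v h0 hne S hc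
  have h2 : ∑ i ∈ Sᶜ, |v i| = 0 := by
    refine Finset.sum_eq_zero fun i hi => ?_
    by_contra hvi
    exact (Finset.mem_compl.1 hi) (hS (by simpa using hvi))
  rw [h2] at h
  exact absurd h (not_lt.2 (Finset.sum_nonneg fun i _ => abs_nonneg _))

theorem nsp_left {m n s : ℕ} (hs : s ≤ n) (V : Submodule ℝ (Fin n → ℝ))
    (hV : ∀ v ∈ V, v ≠ 0 → SparseVec s v) (A : Matrix (Fin m) (Fin n) ℝ) (hA : NSP s A) :
    ∃ L : Matrix (Fin n) (Fin m) ℝ, ∀ v ∈ V, (L * A).mulVec v = v := by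
  obtain ⟨g, hg⟩ := LinearMap.exists_leftInverse_of_injective (A.mulVecLin ∘ₗ V.subtype) (by
    rw [LinearMap.ker_eq_bot']
    rintro ⟨v, hv⟩ h
    exact Subtype.ext (nsp_inj hs V hV A hA v hv h))
  refine ⟨LinearMap.toMatrix' (V.subtype ∘ₗ g), fun v hv => ?_⟩
  rw [← Matrix.mulVec_mulVec, LinearMap.toMatrix'_mulVec]
  exact congrArg Subtype.val (LinearMap.congr_fun hg ⟨v, hv⟩)

/-- Tensor injectivity lemma: if every nonzero vector of each subspace `V j ⊆ ℝ^{N j}`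
is `s`-sparse, each `U j` satisfies NSP of order `s`, the mode-`j` fibers of `W` all
lie in `V j` (i.e. `W ∈ V 1 ∘ … ∘ V d`), and `W ×₁ U 1 ⋯ ×_d U d = 0`, then `W = 0`. -/
theorem tensor_injectivity {d : ℕ} {N M : Fin d → ℕ} {s : ℕ}
    (hs : ∀ j, s ≤ N j)
    (V : ∀ j, Submodule ℝ (Fin (N j) → ℝ))
    (hV : ∀ j, ∀ v ∈ V j, v ≠ 0 → SparseVec s v)
    (U : ∀ j, Matrix (Fin (M j)) (Fin (N j)) ℝ)
    (hU : ∀ j, NSP s (U j))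
    (W : (∀ j, Fin (N j)) → ℝ)
    (hW : ∀ j, ∀ g : ∀ l, Fin (N l), (fun a => W (Function.update g j a)) ∈ V j)
    (hzero : modeProdAll U W = 0) :
    W = 0 := by
  choose L hL using fun j => nsp_left (hs j) (V j) (hV j) (U j) (hU j)
  funext h
  have h1 : contr W (fun j => (L j * U j) (h j)) = contr W (fun j => Pi.single (h j) 1) := by
    refine contr_congr W V hW _ _ fun j v hv => ?_
    have := congrFun (hL j v hv) (h j)
    simp only [Matrix.mulVec, dotProduct] at this
    rw [this]
    simp [Pi.single_apply]
  have h2 : contr W (fun j => Pi.single (h j) 1) = W h := by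
    unfold contr
    rw [Finset.sum_eq_single h]
    · simp
    · intro g _ hg
      obtain ⟨j, hj⟩ := Function.ne_iff.1 hg
      rw [Finset.prod_eq_zero (Finset.mem_univ j), zero_mul]
      simp [hj]
    · simp
  have h3 : contr W (fun j => (L j * U j) (h j)) =
      ∑ k : ∀ j, Fin (M j), (∏ j, L j (h j) (k j)) * modeProdAll U W k := by
    unfold contr modeProdAll
    simp only [Matrix.mul_apply, Finset.prod_univ_sum, Fintype.piFinset_univ, Finset.sum_mul,
      Finset.mul_sum]
    rw [Finset.sum_comm]
    refine Finset.sum_congr rfl fun k _ => Finset.sum_congr rfl fun g _ => ?_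
    rw [Finset.prod_mul_distrib, mul_assoc]
  rw [← h2, ← h1, h3, hzero]
  simp
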